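/- Let G = (V,E) be a finite connected undirected graph with positive symmetric edge weights ω, and let i ≠ j be vertices. The probability that the random walk started at i reaches j before returning to i equals 2·ω(G)/(ω(i)·κ_{ij}) = 1/(ω(i)·R_{ij}), where κ_{ij} is the commute time between i and j and R_{ij} the effective resistance. -/

import Mathlib

open Finset

variable {V : Type*}

/-- The total weight incident to a vertex: `ω(i) = Σ_l ω(i,l)`. -/
noncomputable def vWeight [Fintype V] (w : V → V → ℝ) (i : V) : ℝ :=
  ∑ l, w i l

/-- The total weight of the graph (each edge counted once): `ω(G)`. -/
noncomputable def gWeight [Fintype V] (w : V → V → ℝ) : ℝ :=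
  (∑ i, ∑ l, w i l) / 2

/-- Transition probabilities of the random walk on the weighted graph:
from `i`, move to `l` with probability `ω(i,l)/ω(i)`. -/
noncomputable def walkStep [Fintype V] (w : V → V → ℝ) (i l : V) : ℝ :=
  w i l / vWeight w i

/-- `w` is a system of positive symmetric edge weights on a finite connected undirected
graph: symmetric, nonnegative, zero on the diagonal (and on non-edges), and the graph
whose edges are the pairs with positive weight is connected. -/
def IsWeight [Fintype V] (w : V → V → ℝ) : Prop :=
  (∀ a b, w a b = w b a) ∧ (∀ a b, 0 ≤ w a b) ∧ (∀ a, w a a = 0) ∧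
    (∀ a b, Relation.ReflTransGen (fun x y => 0 < w x y) a b)

/-- `hitSurv p j n i` is the probability that the Markov chain with transition kernel `p`
started at `i` has not visited `j` at any of the times `0, 1, …, n`. -/
noncomputable def hitSurv {S : Type*} [Fintype S] [DecidableEq S] (p : S → S → ℝ) (j : S) :
    ℕ → S → ℝ
  | 0 => fun i => if i = j then 0 else 1
  | n + 1 => fun i => if i = j then 0 else ∑ l, p i l * hitSurv p j n l

/-- Expected hitting time of `j` from `i`: the expected number of steps for the chain
started at `i` to first reach `j`, computed as `Σ_n P(T_j > n)`. -/
noncomputable def hitTime {S : Type*} [Fintype S] [DecidableEq S] (p : S → S → ℝ)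
    (i j : S) : ℝ :=
  ∑' n : ℕ, hitSurv p j n i

/-- A unit-current potential from `i` to `j`: Kirchhoff's equations when a unit current
enters at `i` and leaves at `j`. -/
def IsUnitPotential [Fintype V] (w : V → V → ℝ) (i j : V) (φ : V → ℝ) : Prop :=
  (∀ k, k ≠ i → k ≠ j → ∑ l, w k l * (φ k - φ l) = 0) ∧
    (∑ l, w i l * (φ i - φ l) = 1) ∧
    (∑ l, w j l * (φ j - φ l) = -1)

/-- `R` is the effective-resistance matrix of the weighted graph `w`:
`R a a = 0`, and for `a ≠ b`, `R a b = V_a - V_b` for a unit-current potential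
from `a` to `b`. -/
def IsResistance [Fintype V] (w : V → V → ℝ) (R : V → V → ℝ) : Prop :=
  (∀ a, R a a = 0) ∧
    ∀ a b, a ≠ b → ∃ φ, IsUnitPotential w a b φ ∧ R a b = φ a - φ b

/-- The weight function of an unweighted graph: weight `1` on edges, `0` elsewhere. -/
noncomputable def aw (G : SimpleGraph V) [DecidableRel G.Adj] (a b : V) : ℝ :=
  if G.Adj a b then 1 else 0

/-- Probability of a given trajectory: `trajProb p i xs` is the probability that the
chain started at `i` successively visits the vertices of the list `xs`. -/
noncomputable def trajProb {S : Type*} [Fintype S] (p : S → S → ℝ) : S → List S → ℝ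
  | _, [] => 1
  | i, x :: xs => p i x * trajProb p x xs

/-- Probability that the walk started at `i` has not visited every vertex by time `n`. -/
noncomputable def notCoveredProb [Fintype V] [DecidableEq V] (p : V → V → ℝ) (n : ℕ)
    (i : V) : ℝ :=
  ∑ xs : Fin n → V, trajProb p i (List.ofFn xs) *
    (if (i :: List.ofFn xs).toFinset = Finset.univ then 0 else 1)

/-- The cover time from `i`: the expected number of steps for the walk started at `i`
to have visited every vertex, computed as `Σ_n P(T_cov > n)`. -/
noncomputable def coverTime [Fintype V] [DecidableEq V] (p : V → V → ℝ) (i : V) : ℝ :=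
  ∑' n : ℕ, notCoveredProb p n i

/-- `visitSurv p j k n i` is the probability that the chain started at `i` is at `k` at
time `n` without having visited `j` at any of the times `0, …, n`. -/
noncomputable def visitSurv [Fintype V] [DecidableEq V] (p : V → V → ℝ) (j k : V) :
    ℕ → V → ℝ
  | 0 => fun i => if i = j then 0 else if i = k then 1 else 0
  | n + 1 => fun i => if i = j then 0 else ∑ l, p i l * visitSurv p j k n l

/-- `expVisits p i j k` is the expected number of visits to `k` (counting time `0`) of
the chain started at `i` strictly before its first visit to `j`. -/
noncomputable def expVisits [Fintype V] [DecidableEq V] (p : V → V → ℝ) (i j k : V) : ℝ :=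
  ∑' n : ℕ, visitSurv p j k n i

/-- `reachBeforeAux p i j n l` is the probability that the walk started at `l` reaches `j`
within `n` steps without visiting `i` first. -/
noncomputable def reachBeforeAux [Fintype V] [DecidableEq V] (p : V → V → ℝ) (i j : V) :
    ℕ → V → ℝ
  | 0 => fun l => if l = j then 1 else 0
  | n + 1 => fun l =>
      if l = j then 1 else if l = i then 0 else ∑ m, p l m * reachBeforeAux p i j n m

/-- The probability that the walk started at `i` reaches `j` before returning to `i`:
one step from `i` to `l`, then reach `j` before `i` (monotone limit in `n`). -/
noncomputable def escapeProb [Fintype V] [DecidableEq V] (p : V → V → ℝ) (i j : V) : ℝ :=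
  ∑ l, p i l * ⨆ n, reachBeforeAux p i j n l

/-- `hitSurvSet p F n x` is the probability that the chain started at `x` has not visited
the set `F` at any of the times `0, …, n`. -/
noncomputable def hitSurvSet {S : Type*} [Fintype S] (p : S → S → ℝ) (F : S → Prop)
    [DecidablePred F] : ℕ → S → ℝ
  | 0 => fun x => if F x then 0 else 1
  | n + 1 => fun x => if F x then 0 else ∑ y, p x y * hitSurvSet p F n y

/-- Expected hitting time of the set `F` from `x`, computed as `Σ_n P(T_F > n)`. -/
noncomputable def hitTimeSet {S : Type*} [Fintype S] (p : S → S → ℝ) (F : S → Prop)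
    [DecidablePred F] (x : S) : ℝ :=
  ∑' n : ℕ, hitSurvSet p F n x

/-- The associated chain `𝒢` on pairs `(P, i)` (visited set, current vertex): from
`(P, i)` it moves to `(P ∪ {j}, j)` with probability `ω(i,j)/ω(i)`. -/
noncomputable def pairStep [Fintype V] [DecidableEq V] (w : V → V → ℝ)
    (s t : Finset V × V) : ℝ :=
  if t.1 = insert t.2 s.1 then walkStep w s.2 t.2 else 0

/-- `exitProbAux p P j n i` is the probability that the walk started at `i` leaves `P`
within `n` steps and that the first vertex visited outside `P` is `j`. -/
noncomputable def exitProbAux [Fintype V] [DecidableEq V] (p : V → V → ℝ) (P : Finset V)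
    (j : V) : ℕ → V → ℝ
  | 0 => fun i => if i ∈ P then 0 else if i = j then 1 else 0
  | n + 1 => fun i =>
      if i ∈ P then ∑ l, p i l * exitProbAux p P j n l else if i = j then 1 else 0

/-- The probability that the first vertex outside `P` visited by the walk started at `i`
is `j` (monotone limit in the number of allowed steps). -/
noncomputable def exitProb [Fintype V] [DecidableEq V] (p : V → V → ℝ) (P : Finset V)
    (i j : V) : ℝ :=
  ⨆ n, exitProbAux p P j n i

/-- The negated weighted Laplacian `Δ` of the weighted graph `w` on `Fin n`. -/
noncomputable def negLaplacian (n : ℕ) (w : Fin n → Fin n → ℝ) :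
    Matrix (Fin n) (Fin n) ℝ :=
  Matrix.of fun k l => if k = l then -(∑ m, w k m) else w k l

/-- `Δ₂`: the negated weighted Laplacian with its first row replaced by the first row of
the identity matrix. -/
noncomputable def delta2 (n : ℕ) (hn : 0 < n) (w : Fin n → Fin n → ℝ) :
    Matrix (Fin n) (Fin n) ℝ :=
  (negLaplacian n w).updateRow ⟨0, hn⟩ (fun l => if l = ⟨0, hn⟩ then 1 else 0)

/-- The weight function obtained from `w` by adding weight `u` on the edge `{a, b}`. -/
noncomputable def addEdge [DecidableEq V] (w : V → V → ℝ) (a b : V) (u : ℝ)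
    (x y : V) : ℝ :=
  w x y + (if (x = a ∧ y = b) ∨ (x = b ∧ y = a) then u else 0)

/-- The weighted graph Laplacian. -/
noncomputable def weightedLaplacian [Fintype V] (w : V → V → ℝ) (f : V → ℝ) (k : V) : ℝ :=
  ∑ l, w k l * (f k - f l)

theorem weightedLaplacian_sub [Fintype V] (w : V → V → ℝ) (f g : V → ℝ) (k : V) :
    weightedLaplacian w (f - g) k = weightedLaplacian w f k - weightedLaplacian w g k := by
  simp only [weightedLaplacian, Pi.sub_apply, ← sum_sub_distrib]
  exact sum_congr rfl fun l _ => by ring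

theorem weightedLaplacian_smul [Fintype V] (w : V → V → ℝ) (c : ℝ) (f : V → ℝ) (k : V) :
    weightedLaplacian w (c • f) k = c * weightedLaplacian w f k := by
  simp only [weightedLaplacian, Pi.smul_apply, smul_eq_mul, mul_sum]
  exact sum_congr rfl fun l _ => by ring

theorem weightedLaplacian_eq [Fintype V] (w : V → V → ℝ) (f : V → ℝ) (k : V) :
    weightedLaplacian w f k = vWeight w k * f k - ∑ l, w k l * f l := by
  simp only [weightedLaplacian, vWeight, sum_mul, ← sum_sub_distrib, mul_sub]

/-- The Dirichlet energy identity. -/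
theorem sum_mul_weightedLaplacian [Fintype V] {w : V → V → ℝ} (hs : ∀ a b, w a b = w b a)
    (f : V → ℝ) :
    2 * ∑ k, f k * weightedLaplacian w f k = ∑ k, ∑ l, w k l * (f k - f l) ^ 2 := by
  have h : ∑ k, f k * weightedLaplacian w f k = ∑ k, ∑ l, w k l * (f l * (f l - f k)) := by
    rw [sum_comm]
    simp only [weightedLaplacian, mul_sum]
    exact sum_congr rfl fun k _ => sum_congr rfl fun l _ => by rw [hs l k]; ring
  rw [two_mul]
  nth_rewrite 2 [h]
  simp only [weightedLaplacian, mul_sum, ← sum_add_distrib]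
  exact sum_congr rfl fun k _ => sum_congr rfl fun l _ => by ring

theorem sum_weightedLaplacian [Fintype V] {w : V → V → ℝ} (hs : ∀ a b, w a b = w b a)
    (f : V → ℝ) : ∑ k, weightedLaplacian w f k = 0 := by
  have h : ∑ k, weightedLaplacian w f k = -∑ k, weightedLaplacian w f k := by
    simp only [weightedLaplacian, ← sum_neg_distrib]
    rw [sum_comm]
    exact sum_congr rfl fun k _ => sum_congr rfl fun l _ => by rw [hs l k]; ring
  linarith

/-- A function of nonpositive Dirichlet energy is constant. -/
theorem IsWeight.eq_of_energy_nonpos [Fintype V] {w : V → V → ℝ} (hw : IsWeight w) {f : V → ℝ}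
    (hf : ∑ k, f k * weightedLaplacian w f k ≤ 0) (a b : V) : f a = f b := by
  obtain ⟨hs, h0, -, hc⟩ := hw
  have hnn : ∀ k l, 0 ≤ w k l * (f k - f l) ^ 2 := fun k l => mul_nonneg (h0 k l) (sq_nonneg _)
  have hE : ∑ k, ∑ l, w k l * (f k - f l) ^ 2 = 0 :=
    le_antisymm (by rw [← sum_mul_weightedLaplacian hs]; linarith)
      (sum_nonneg fun k _ => sum_nonneg fun l _ => hnn k l)
  have hz : ∀ k l, w k l * (f k - f l) ^ 2 = 0 := fun k l =>
    (sum_eq_zero_iff_of_nonneg fun l _ => hnn k l).1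
      ((sum_eq_zero_iff_of_nonneg fun k _ => sum_nonneg fun l _ => hnn k l).1 hE k (mem_univ k))
      l (mem_univ l)
  induction hc a b with
  | refl => rfl
  | @tail x y _ hxy ih =>
    rw [ih]
    rcases mul_eq_zero.1 (hz x y) with h | h
    · exact absurd h hxy.ne'
    · exact sub_eq_zero.1 (pow_eq_zero_iff two_ne_zero |>.1 h)

theorem IsWeight.vWeight_pos [Fintype V] [Nontrivial V] {w : V → V → ℝ} (hw : IsWeight w)
    (a : V) : 0 < vWeight w a := by
  obtain ⟨b, hb⟩ := exists_ne a
  rcases (hw.2.2.2 a b).cases_head with h | ⟨c, hac, -⟩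
  · exact absurd h.symm hb
  · exact hac.trans_le (single_le_sum (fun l _ => hw.2.1 a l) (mem_univ c))

theorem IsWeight.walkStep_nonneg [Fintype V] {w : V → V → ℝ} (hw : IsWeight w) (a b : V) :
    0 ≤ walkStep w a b :=
  div_nonneg (hw.2.1 a b) (sum_nonneg fun l _ => hw.2.1 a l)

theorem IsWeight.sum_walkStep [Fintype V] [Nontrivial V] {w : V → V → ℝ} (hw : IsWeight w)
    (a : V) : ∑ l, walkStep w a l = 1 := by
  simp only [walkStep, ← sum_div]
  exact div_self (hw.vWeight_pos a).ne'

theorem IsWeight.vWeight_mul_sum_walkStep [Fintype V] [Nontrivial V] {w : V → V → ℝ}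
    (hw : IsWeight w) (f : V → ℝ) (a : V) :
    vWeight w a * ∑ l, walkStep w a l * f l = ∑ l, w a l * f l := by
  rw [mul_sum]
  refine sum_congr rfl fun l _ => ?_
  have := (hw.vWeight_pos a).ne'
  rw [walkStep]
  field_simp

/-- `f` solves the mean value equation with source `c` at `a` iff its Laplacian is `ω(a) c`. -/
theorem IsWeight.weightedLaplacian_eq_iff [Fintype V] [Nontrivial V] {w : V → V → ℝ}
    (hw : IsWeight w) (f : V → ℝ) (a : V) (c : ℝ) :
    weightedLaplacian w f a = vWeight w a * c ↔ f a = c + ∑ l, walkStep w a l * f l := by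
  rw [weightedLaplacian_eq, ← hw.vWeight_mul_sum_walkStep, ← mul_sub,
    mul_right_inj' (hw.vWeight_pos a).ne', sub_eq_iff_eq_add]

theorem IsUnitPotential.weightedLaplacian_eq [Fintype V] [DecidableEq V] {w : V → V → ℝ}
    {i j : V} {φ : V → ℝ} (hφ : IsUnitPotential w i j φ) (hij : i ≠ j) (k : V) :
    weightedLaplacian w φ k = (if k = i then 1 else 0) - (if k = j then 1 else 0) := by
  by_cases hi : k = i
  · subst hi
    simpa [weightedLaplacian, hij] using hφ.2.1
  · by_cases hj : k = j
    · subst hj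
      simpa [weightedLaplacian, hi] using hφ.2.2
    · simpa [weightedLaplacian, hi, hj] using hφ.1 k hi hj

theorem IsUnitPotential.sub_pos [Fintype V] [DecidableEq V] {w : V → V → ℝ} (hw : IsWeight w)
    {i j : V} {φ : V → ℝ} (hφ : IsUnitPotential w i j φ) (hij : i ≠ j) : 0 < φ i - φ j := by
  by_contra! h
  have hconst : ∀ a b, φ a = φ b := hw.eq_of_energy_nonpos (by
    simpa [hφ.weightedLaplacian_eq hij, mul_sub, sum_sub_distrib] using h)
  have h1 := hφ.2.1
  rw [sum_eq_zero fun l _ => by rw [hconst i l, sub_self, mul_zero]] at h1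
  exact zero_ne_one h1

section ReachBefore

variable [Fintype V] [DecidableEq V] {p : V → V → ℝ}

theorem reachBeforeAux_nonneg (h0 : ∀ a b, 0 ≤ p a b) (i j : V) (n : ℕ) (l : V) :
    0 ≤ reachBeforeAux p i j n l := by
  induction n generalizing l with
  | zero => simp only [reachBeforeAux]; split_ifs <;> norm_num
  | succ n ih =>
    simp only [reachBeforeAux]
    split_ifs
    exacts [zero_le_one, le_rfl, sum_nonneg fun m _ => mul_nonneg (h0 l m) (ih m)]

theorem reachBeforeAux_le_one (h0 : ∀ a b, 0 ≤ p a b) (h1 : ∀ a, ∑ b, p a b = 1) (i j : V)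
    (n : ℕ) (l : V) : reachBeforeAux p i j n l ≤ 1 := by
  induction n generalizing l with
  | zero => simp only [reachBeforeAux]; split_ifs <;> norm_num
  | succ n ih =>
    simp only [reachBeforeAux]
    split_ifs
    · exact le_rfl
    · exact zero_le_one
    · rw [← h1 l]
      exact sum_le_sum fun m _ => mul_le_of_le_one_right (h0 l m) (ih m)

theorem monotone_reachBeforeAux (h0 : ∀ a b, 0 ≤ p a b) (i j l : V) :
    Monotone fun n => reachBeforeAux p i j n l := by
  refine monotone_nat_of_le_succ fun n => ?_
  induction n generalizing l with
  | zero =>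
    by_cases h : l = j
    · simp [reachBeforeAux, h]
    · calc reachBeforeAux p i j 0 l = 0 := by simp [reachBeforeAux, h]
        _ ≤ reachBeforeAux p i j 1 l := reachBeforeAux_nonneg h0 i j 1 l
  | succ n ih =>
    rw [reachBeforeAux, reachBeforeAux]
    beta_reduce
    split_ifs
    exacts [le_rfl, le_rfl, sum_le_sum fun m _ => mul_le_mul_of_nonneg_left (ih m) (h0 l m)]

theorem tendsto_reachBeforeAux (h0 : ∀ a b, 0 ≤ p a b) (h1 : ∀ a, ∑ b, p a b = 1) (i j l : V) :
    Filter.Tendsto (fun n => reachBeforeAux p i j n l) Filter.atTop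
      (nhds (⨆ n, reachBeforeAux p i j n l)) :=
  tendsto_atTop_ciSup (monotone_reachBeforeAux h0 i j l)
    ⟨1, Set.forall_mem_range.2 fun n => reachBeforeAux_le_one h0 h1 i j n l⟩

/-- First-step analysis for the probability of reaching `j` before `i`. -/
theorem iSup_reachBeforeAux (h0 : ∀ a b, 0 ≤ p a b) (h1 : ∀ a, ∑ b, p a b = 1) (i j l : V) :
    ⨆ n, reachBeforeAux p i j n l =
      if l = j then 1 else if l = i then 0 else ∑ m, p l m * ⨆ n, reachBeforeAux p i j n m := by
  refine tendsto_nhds_unique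
    ((tendsto_reachBeforeAux h0 h1 i j l).comp (Filter.tendsto_add_atTop_nat 1)) ?_
  simp only [Function.comp_def, reachBeforeAux]
  split_ifs
  · exact tendsto_const_nhds
  · exact tendsto_const_nhds
  · exact tendsto_finsetSum _ fun m _ => (tendsto_reachBeforeAux h0 h1 i j m).const_mul _

end ReachBefore

theorem IsWeight.iSup_reachBeforeAux_eq [Fintype V] [DecidableEq V] {w : V → V → ℝ}
    (hw : IsWeight w) {i j : V} (hij : i ≠ j) {φ : V → ℝ} (hφ : IsUnitPotential w i j φ) (l : V) :
    ⨆ n, reachBeforeAux (walkStep w) i j n l = (φ i - φ l) / (φ i - φ j) := by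
  have : Nontrivial V := ⟨i, j, hij⟩
  have hD := hφ.sub_pos hw hij
  have hu := iSup_reachBeforeAux hw.walkStep_nonneg hw.sum_walkStep i j
  set u : V → ℝ := fun l => ⨆ n, reachBeforeAux (walkStep w) i j n l
  change ∀ l, u l = if l = j then 1 else if l = i then 0 else ∑ m, walkStep w l m * u m at hu
  change u l = _
  have hui : u i = 0 := by simpa [hij] using hu i
  have huj : u j = 1 := by simpa using hu j
  set d : V → ℝ := (φ i - φ j) • u - (-1 : ℝ) • φ with hd
  have hLd : ∀ k, k ≠ i → k ≠ j → weightedLaplacian w d k = 0 := by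
    intro k hi hj
    have hLu : weightedLaplacian w u k = vWeight w k * 0 :=
      (hw.weightedLaplacian_eq_iff u k 0).2 (by simpa [hi, hj] using hu k)
    rw [hd, weightedLaplacian_sub, weightedLaplacian_smul, weightedLaplacian_smul, hLu,
      hφ.weightedLaplacian_eq hij]
    simp [hi, hj]
  have hdi : d i = φ i := by simp [hd, hui]
  have hdj : d j = φ i := by simp [hd, huj]
  have hE : ∑ k, d k * weightedLaplacian w d k ≤ 0 := by
    have : ∀ k, d k * weightedLaplacian w d k = φ i * weightedLaplacian w d k := by
      intro k
      by_cases hi : k = i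
      · rw [hi, hdi]
      · by_cases hj : k = j
        · rw [hj, hdj]
        · rw [hLd k hi hj, mul_zero, mul_zero]
    simp only [this, ← mul_sum, sum_weightedLaplacian hw.1, mul_zero, le_refl]
  have hl : d l = φ i := (hw.eq_of_energy_nonpos hE l i).trans hdi
  simp only [hd, Pi.sub_apply, Pi.smul_apply, smul_eq_mul] at hl
  rw [eq_div_iff hD.ne']
  linarith

theorem IsWeight.escapeProb_eq [Fintype V] [DecidableEq V] {w : V → V → ℝ}
    (hw : IsWeight w) {i j : V} (hij : i ≠ j) {φ : V → ℝ} (hφ : IsUnitPotential w i j φ) :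
    escapeProb (walkStep w) i j = 1 / (vWeight w i * (φ i - φ j)) := by
  simp only [escapeProb, hw.iSup_reachBeforeAux_eq hij hφ, walkStep, div_mul_div_comm, ← sum_div]
  rw [hφ.2.1]

/-- The Dirichlet problem `L g = f` off `j`, `g j = f j`, is solvable. -/
theorem IsWeight.exists_weightedLaplacian_eq [Fintype V] [DecidableEq V] {w : V → V → ℝ}
    (hw : IsWeight w) (j : V) (f : V → ℝ) :
    ∃ g : V → ℝ, g j = f j ∧ ∀ k, k ≠ j → weightedLaplacian w g k = f k := by
  let T : (V → ℝ) →ₗ[ℝ] (V → ℝ) :=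
    { toFun := fun g k => if k = j then g j else weightedLaplacian w g k
      map_add' := fun g g' => by
        ext k
        have := weightedLaplacian_sub w (g + g') g' k
        rw [add_sub_cancel_right] at this
        by_cases hk : k = j
        · simp [hk]
        · simp only [hk, if_false, Pi.add_apply]
          linarith
      map_smul' := fun c g => by
        ext k
        by_cases hk : k = j <;> simp [hk, weightedLaplacian_smul] }
  have hT : ∀ g k, T g k = if k = j then g j else weightedLaplacian w g k := fun _ _ => rfl
  have hinj : Function.Injective T := by
    refine (injective_iff_map_eq_zero T).2 fun g hg => ?_
    have hg' : ∀ k, (if k = j then g j else weightedLaplacian w g k) = 0 := fun k => by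
      rw [← hT, hg, Pi.zero_apply]
    have hgj : g j = 0 := by simpa using hg' j
    have hE : ∑ k, g k * weightedLaplacian w g k ≤ 0 := by
      refine (sum_eq_zero fun k _ => ?_).le
      by_cases hk : k = j
      · rw [hk, hgj, zero_mul]
      · have := hg' k
        rw [if_neg hk] at this
        rw [this, mul_zero]
    ext k
    exact (hw.eq_of_energy_nonpos hE k j).trans hgj
  obtain ⟨g, hg⟩ := LinearMap.injective_iff_surjective.1 hinj f
  refine ⟨g, ?_, fun k hk => ?_⟩
  · rw [← hg, hT, if_pos rfl]
  · rw [← hg, hT, if_neg hk]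

theorem hitSurv_nonneg [Fintype V] [DecidableEq V] {p : V → V → ℝ} (h0 : ∀ a b, 0 ≤ p a b)
    (j : V) (n : ℕ) (k : V) : 0 ≤ hitSurv p j n k := by
  induction n generalizing k with
  | zero => simp only [hitSurv]; split_ifs <;> norm_num
  | succ n ih =>
    simp only [hitSurv]
    split_ifs
    exacts [le_rfl, sum_nonneg fun m _ => mul_nonneg (h0 k m) (ih m)]

theorem hitSurv_self [Fintype V] [DecidableEq V] (p : V → V → ℝ) (j : V) (n : ℕ) :
    hitSurv p j n j = 0 := by
  cases n <;> simp [hitSurv]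

theorem hitTime_self [Fintype V] [DecidableEq V] (p : V → V → ℝ) (j : V) :
    hitTime p j j = 0 := by
  simp [hitTime, hitSurv_self]

theorem IsWeight.summable_hitSurv [Fintype V] [DecidableEq V] [Nontrivial V] {w : V → V → ℝ}
    (hw : IsWeight w) (j k : V) : Summable fun n => hitSurv (walkStep w) j n k := by
  obtain ⟨g, hgj, hg⟩ := hw.exists_weightedLaplacian_eq j
    (fun k => if k = j then 0 else vWeight w k * 1)
  rw [if_pos rfl] at hgj
  have hrec : ∀ k, k ≠ j → g k = 1 + ∑ l, walkStep w k l * g l := fun k hk =>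
    (hw.weightedLaplacian_eq_iff g k 1).1 (by rw [hg k hk, if_neg hk])
  have hg0 : ∀ k, 0 ≤ g k := by
    obtain ⟨m, hm⟩ := Finite.exists_min g
    have hmj : m = j := by
      by_contra hne
      have h := hrec m hne
      have hle : ∑ l, walkStep w m l * g m ≤ ∑ l, walkStep w m l * g l :=
        sum_le_sum fun l _ => mul_le_mul_of_nonneg_left (hm l) (hw.walkStep_nonneg m l)
      rw [← sum_mul, hw.sum_walkStep, one_mul] at hle
      linarith
    intro k
    rw [← hgj, ← hmj]
    exact hm k
  refine summable_of_sum_range_le (c := g k) (hitSurv_nonneg hw.walkStep_nonneg j · k) fun n => ?_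
  induction n generalizing k with
  | zero => simpa using hg0 k
  | succ n ih =>
    by_cases hk : k = j
    · subst hk
      simp [hitSurv_self, hgj]
    · rw [sum_range_succ', hrec k hk, add_comm]
      simp only [hitSurv, hk, if_false]
      rw [sum_comm]
      simp only [← mul_sum]
      gcongr with l
      · exact hw.walkStep_nonneg k l
      · exact ih l

/-- First-step analysis for hitting times. -/
theorem IsWeight.hitTime_eq [Fintype V] [DecidableEq V] [Nontrivial V] {w : V → V → ℝ}
    (hw : IsWeight w) {j k : V} (hk : k ≠ j) :
    hitTime (walkStep w) k j = 1 + ∑ l, walkStep w k l * hitTime (walkStep w) l j := by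
  rw [hitTime, (hw.summable_hitSurv j k).tsum_eq_zero_add]
  simp only [hitSurv, hk, if_false, hitTime, ← tsum_mul_left]
  rw [Summable.tsum_finsetSum fun l _ => (hw.summable_hitSurv j l).mul_left _]

theorem IsWeight.weightedLaplacian_hitTime [Fintype V] [DecidableEq V] [Nontrivial V]
    {w : V → V → ℝ} (hw : IsWeight w) (j k : V) :
    weightedLaplacian w (hitTime (walkStep w) · j) k =
      vWeight w k - if k = j then 2 * gWeight w else 0 := by
  have hne : ∀ k, k ≠ j → weightedLaplacian w (hitTime (walkStep w) · j) k = vWeight w k := by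
    intro k hk
    rw [(hw.weightedLaplacian_eq_iff _ k 1).2 (hw.hitTime_eq hk), mul_one]
  by_cases hk : k = j
  · subst hk
    have h := sum_weightedLaplacian hw.1 (hitTime (walkStep w) · k)
    have hG : ∑ a, vWeight w a = 2 * gWeight w := by simp only [vWeight, gWeight]; ring
    rw [← add_sum_erase _ _ (mem_univ k)] at h hG
    rw [sum_congr rfl fun a ha => hne a (ne_of_mem_erase ha)] at h
    rw [if_pos rfl]
    linarith
  · rw [hne k hk, if_neg hk, sub_zero]

/-- The commute time is `2 ω(G)` times the effective resistance. -/
theorem IsWeight.commuteTime_eq [Fintype V] [DecidableEq V] {w : V → V → ℝ} (hw : IsWeight w)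
    {i j : V} (hij : i ≠ j) {φ : V → ℝ} (hφ : IsUnitPotential w i j φ) :
    hitTime (walkStep w) i j + hitTime (walkStep w) j i = 2 * gWeight w * (φ i - φ j) := by
  have : Nontrivial V := ⟨i, j, hij⟩
  have h := hw.eq_of_energy_nonpos
    (f := ((hitTime (walkStep w) · j) - (hitTime (walkStep w) · i)) - (2 * gWeight w) • φ)
    (by
      refine (sum_eq_zero fun k _ => ?_).le
      rw [weightedLaplacian_sub, weightedLaplacian_sub, weightedLaplacian_smul,
        hw.weightedLaplacian_hitTime, hw.weightedLaplacian_hitTime, hφ.weightedLaplacian_eq hij]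
      refine mul_eq_zero_of_right _ ?_
      split_ifs <;> ring) i j
  simp only [Pi.sub_apply, Pi.smul_apply, smul_eq_mul, hitTime_self] at h
  linarith

theorem IsWeight.gWeight_pos [Fintype V] [Nontrivial V] {w : V → V → ℝ} (hw : IsWeight w) :
    0 < gWeight w :=
  half_pos (sum_pos (fun a _ => hw.vWeight_pos a) univ_nonempty)

/-- The probability that the walk started at `i` reaches `j` before
returning to `i` is `2·ω(G)/(ω(i)·κ_{ij}) = 1/(ω(i)·R_{ij})`. -/
theorem escape_probability_formula
    {V : Type*} [Fintype V] [DecidableEq V] (w : V → V → ℝ) (hw : IsWeight w)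
    (i j : V) (hij : i ≠ j) (φ : V → ℝ) (hφ : IsUnitPotential w i j φ) :
    escapeProb (walkStep w) i j =
        2 * gWeight w /
          (vWeight w i * (hitTime (walkStep w) i j + hitTime (walkStep w) j i)) ∧
      escapeProb (walkStep w) i j = 1 / (vWeight w i * (φ i - φ j)) := by
  have : Nontrivial V := ⟨i, j, hij⟩
  refine ⟨?_, hw.escapeProb_eq hij hφ⟩
  have hG := hw.gWeight_pos.ne'
  have hi := (hw.vWeight_pos i).ne'
  have hD := (hφ.sub_pos hw hij).ne'
  rw [hw.escapeProb_eq hij hφ, hw.commuteTime_eq hij hφ]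
  field_simp
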